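/- For any i, j ≥ 0 with i + j = 1, the set Bad(i,j) ∩ Bad(1,0) ∩ Bad(0,1) — equivalently, the set of pairs (x₁,x₂) ∈ ℝ² which are (i,j)-badly approximable and with both x₁ and x₂ badly approximable real numbers — has Hausdorff dimension 2. -/

import Mathlib

open scoped ENNReal

/-- The distance from a real number to the nearest integer. -/
noncomputable def distToNearestInt (y : ℝ) : ℝ := |y - (round y : ℝ)|

/-- For weights `i, j ≥ 0` with `i + j = 1`, the set `Bad(i,j)` of pairs
`(x₁, x₂) ∈ ℝ²` for which there exists `c > 0` such that for every integer `q ≥ 1` one has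
`max{‖q x₁‖^(1/i), ‖q x₂‖^(1/j)} > c / q`, the maximum being taken over the components with
positive weight (a component with weight `0` imposes no condition). -/
def badPair (i j : ℝ) : Set (Fin 2 → ℝ) :=
  {x | ∃ c : ℝ, 0 < c ∧ ∀ q : ℕ, 0 < q →
    (0 < i ∧ c / (q : ℝ) < distToNearestInt ((q : ℝ) * x 0) ^ (1 / i)) ∨
    (0 < j ∧ c / (q : ℝ) < distToNearestInt ((q : ℝ) * x 1) ^ (1 / j))}

/-- The set of badly approximable real numbers: `y ∈ Bad` iff there is `c > 0` with
`‖q y‖ > c / q` for all integers `q ≥ 1`. -/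
def badOneDim : Set ℝ :=
  {y | ∃ c : ℝ, 0 < c ∧ ∀ q : ℕ, 0 < q → c / (q : ℝ) < distToNearestInt ((q : ℝ) * y)}

/-!
Fix contraction ratios `α l`, cut boxes with sides `α ^ n * s` into boxes with sides
`α ^ (n + 1) * s`, and let `α l = T ^ (-(1 + w l))` for a weight `w`. By the simplex lemma the
rational points with denominator below `T ^ (n + 1)` near a box of level `n` lie on a hyperplane, so
only a small proportion of the subboxes comes close to them. The limit point of nested boxes that
always avoid these subboxes is `w`-badly approximable. Several weights are treated at once with the
same boxes: as only coordinates of positive weight matter, the ratios `A ^ (1 + w l)` suit `w` with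
`T = A⁻¹`, and badly approximable `l`-th coordinates with `T = A ^ (-(1 + w l) / 2)`.

If the set of these limit points were `μH[d]`-null with `d` less than the dimension, it would be
covered by balls for which the sum of the `r ^ d` is small. Give a ball of radius about `ρ ^ m` a
weight that doubles at every level up to `m`, where `ρ` bounds the ratios. Since at least half of
each box remains available, one can always pass to a subbox whose volume exceeds the weighted volume
of its intersections with the balls. No ball can then contain the limit point, which is absurd.
-/

open MeasureTheory Set Filter Topology Matrix
open scoped NNReal Nat Finset Function

section Hyperplane

/-- The points of `S` lie on a common affine hyperplane of `ℝ^ι`, given by an equation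
`a ⬝ᵥ x = b` with `a ≠ 0`. -/
def LiesInHyperplane {ι : Type*} [Fintype ι] (S : Set (ι → ℝ)) : Prop :=
  ∃ a : ι → ℝ, a ≠ 0 ∧ ∃ b : ℝ, ∀ x ∈ S, a ⬝ᵥ x = b

/-- The vector `(1, x)` of homogeneous coordinates of `x`; the extra coordinate is `none`. -/
def homogenize {ι : Type*} (x : ι → ℝ) : Option ι → ℝ := fun o => o.elim 1 x

variable {ι : Type*} [Fintype ι] {S S' : Set (ι → ℝ)}

lemma LiesInHyperplane.mono (hS' : LiesInHyperplane S') (h : S ⊆ S') : LiesInHyperplane S :=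
  let ⟨a, ha, b, hab⟩ := hS'
  ⟨a, ha, b, fun x hx => hab x (h hx)⟩

lemma LiesInHyperplane.preimage_restrict {s : Finset ι} {Z : Set (s → ℝ)}
    (hZ : LiesInHyperplane Z) : LiesInHyperplane (s.restrict ⁻¹' Z) := by
  classical
  obtain ⟨a, ha, b, hab⟩ := hZ
  obtain ⟨l, hl⟩ := Function.ne_iff.1 ha
  refine ⟨fun l => if h : l ∈ s then a ⟨l, h⟩ else 0,
    Function.ne_iff.2 ⟨l, by simpa using hl⟩, b, fun x hx => ?_⟩
  rw [← hab _ hx]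
  simp only [dotProduct, dite_mul, zero_mul, Finset.sum_dite, Finset.sum_const_zero, add_zero]
  exact Finset.sum_bij' (fun l _ => ⟨l, by simpa using l.2⟩)
    (fun l _ => ⟨l, by simp⟩) (by simp) (by simp) (by simp) (by simp) (by simp)

lemma liesInHyperplane_of_span_ne_top [Nonempty ι]
    (hS : Submodule.span ℝ (homogenize '' S) ≠ ⊤) : LiesInHyperplane S := by
  classical
  obtain ⟨f, hf, hker⟩ := Submodule.exists_le_ker_of_lt_top _ hS.lt_top
  let c : Option ι → ℝ := fun o => f (Pi.single o 1)
  have hfc (v : Option ι → ℝ) : f v = c none * v none + ∑ l, c (some l) * v (some l) := by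
    rw [← Fintype.sum_option (fun o => c o * v o), f.pi_apply_eq_sum_univ]
    refine Finset.sum_congr rfl fun o _ => ?_
    rw [smul_eq_mul, mul_comm]
    congr 2
    ext o'
    simp [Pi.single_apply, eq_comm]
  have hzero : ∀ x ∈ S, c none + ∑ l, c (some l) * x l = 0 := fun x hx => by
    simpa [homogenize] using
      (hfc _).symm.trans (hker (Submodule.subset_span (mem_image_of_mem homogenize hx)))
  by_cases hc : (fun l => c (some l)) = 0
  · have hempty : S = ∅ := by
      by_contra! hne
      obtain ⟨x, hx⟩ := hne
      have hc' (l : ι) : c (some l) = 0 := congrFun hc l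
      have hnone : c none = 0 := by simpa [hc'] using hzero x hx
      exact hf (LinearMap.ext fun v => by simp [hfc, hc', hnone])
    exact ⟨1, one_ne_zero, 0, by simp [hempty]⟩
  · exact ⟨_, hc, -c none, fun x hx => by
      rw [dotProduct]
      linarith [hzero x hx]⟩

lemma liesInHyperplane_of_forall_det_eq_zero [DecidableEq ι] [Nonempty ι]
    (h : ∀ P : Option ι → ι → ℝ, (∀ k, P k ∈ S) → (of fun k => homogenize (P k)).det = 0) :
    LiesInHyperplane S := by
  refine liesInHyperplane_of_span_ne_top fun htop => ?_
  obtain ⟨f, hfS, -, hf⟩ := Submodule.exists_fun_fin_finrank_span_eq ℝ (homogenize '' S)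
  have hcard : Fintype.card (Option ι) =
      Fintype.card (Fin (Module.finrank ℝ (Submodule.span ℝ (homogenize '' S)))) := by
    rw [htop]
    simp
  choose P hP hPf using fun k => hfS (Fintype.equivOfCardEq hcard k)
  have hrows : LinearIndependent ℝ (of fun k => homogenize (P k)).row := by
    rw [show (of fun k => homogenize (P k)).row = f ∘ Fintype.equivOfCardEq hcard from
      funext hPf]
    exact hf.comp _ (Equiv.injective _)
  exact ((isUnit_iff_isUnit_det _).1 (linearIndependent_rows_iff_isUnit.1 hrows)).ne_zero (h P hP)

end Hyperplane

section Simplex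

/-- The rational points of `ℝ^ι` that have a common denominator below `M`. -/
def rationalPoints (ι : Type*) (M : ℝ) : Set (ι → ℝ) :=
  {x | ∃ q : ℕ, 0 < q ∧ (q : ℝ) < M ∧ ∀ l, ∃ p : ℤ, x l = p / q}

variable {ι : Type*} [Fintype ι]

lemma abs_det_le_factorial_mul_prod [DecidableEq ι] {A : Matrix ι ι ℝ} {c : ι → ℝ}
    (h : ∀ i j, |A i j| ≤ c j) :
    |A.det| ≤ (Fintype.card ι)! * ∏ j, c j := by
  calc |A.det| ≤ ∑ σ : Equiv.Perm ι, |Equiv.Perm.sign σ • ∏ j, A (σ j) j| := by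
        rw [det_apply]
        exact Finset.abs_sum_le_sum_abs _ _
    _ = ∑ σ : Equiv.Perm ι, ∏ j, |A (σ j) j| := by
        refine Finset.sum_congr rfl fun σ _ => ?_
        rcases Int.units_eq_one_or (Equiv.Perm.sign σ) with hσ | hσ <;> simp [hσ, Finset.abs_prod]
    _ ≤ ∑ _σ : Equiv.Perm ι, ∏ j, c j := by
        gcongr
        exact h _ _
    _ = (Fintype.card ι)! * ∏ j, c j := by simp [Fintype.card_perm]

lemma det_homogenize_sub [DecidableEq ι] (P : Option ι → ι → ℝ) (z : ι → ℝ) :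
    (of fun k => homogenize (P k - z)).det = (of fun k => homogenize (P k)).det := by
  rw [← det_transpose, ← det_transpose (of fun k => homogenize (P k))]
  refine (det_eq_of_forall_row_eq_smul_add_const (homogenize z - Pi.single none 1) none
    (by simp [homogenize]) ?_).symm
  rintro (_ | l) k <;> simp [homogenize]

lemma abs_det_homogenize_le [DecidableEq ι] {P : Option ι → ι → ℝ} {z h : ι → ℝ}
    (hP : ∀ k l, |P k l - z l| ≤ h l) :
    |(of fun k => homogenize (P k)).det| ≤ (Fintype.card ι + 1)! * ∏ l, h l := by
  rw [← det_homogenize_sub P z]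
  refine (abs_det_le_factorial_mul_prod (c := homogenize h) ?_).trans_eq ?_
  · rintro k (_ | l)
    · simp [homogenize]
    · simpa [homogenize] using hP k l
  · simp [homogenize, Fintype.prod_option]

-- Clearing the denominators turns the determinant into an integer.
lemma one_lt_abs_det_homogenize_mul_pow [DecidableEq ι] {P : Option ι → ι → ℝ} {M : ℝ}
    (hP : ∀ k, P k ∈ rationalPoints ι M) (hdet : (of fun k => homogenize (P k)).det ≠ 0) :
    1 < |(of fun k => homogenize (P k)).det| * M ^ (Fintype.card ι + 1) := by
  choose q hq hqM p hp using hP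
  have hq' (k : Option ι) : (0 : ℝ) < q k := by exact_mod_cast hq k
  let A : Matrix (Option ι) (Option ι) ℤ := of fun k o => o.elim (q k : ℤ) (p k)
  have hA : (A.det : ℝ) = (∏ k, (q k : ℝ)) * (of fun k => homogenize (P k)).det := by
    rw [← det_mul_column, Int.cast_det]
    congr 1
    ext k (_ | l)
    · simp [A, homogenize]
    · simp [A, homogenize, hp, mul_div_cancel₀ _ (hq' k).ne']
  have hprod : (0 : ℝ) < ∏ k, (q k : ℝ) := Finset.prod_pos fun k _ => hq' k
  have hA0 : A.det ≠ 0 := by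
    rw [← Int.cast_ne_zero (α := ℝ), hA]
    exact mul_ne_zero hprod.ne' hdet
  calc (1 : ℝ) ≤ |(A.det : ℝ)| := by exact_mod_cast Int.one_le_abs hA0
    _ = |(of fun k => homogenize (P k)).det| * ∏ k, (q k : ℝ) := by
        rw [hA, abs_mul, abs_of_pos hprod, mul_comm]
    _ < |(of fun k => homogenize (P k)).det| * ∏ _k : Option ι, M :=
        mul_lt_mul_of_pos_left (Finset.prod_lt_prod_of_nonempty (fun k _ => hq' k)
          (fun k _ => hqM k) Finset.univ_nonempty) (abs_pos.2 hdet)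
    _ = _ := by simp

/-- Davenport's simplex lemma. -/
theorem liesInHyperplane_rationalPoints_inter_Icc [Nonempty ι] {M : ℝ} {h : ι → ℝ}
    (hle : (Fintype.card ι + 1)! * (∏ l, h l) * M ^ (Fintype.card ι + 1) ≤ 1) (z : ι → ℝ) :
    LiesInHyperplane (rationalPoints ι M ∩ Icc (z - h) (z + h)) := by
  classical
  refine liesInHyperplane_of_forall_det_eq_zero fun P hP => ?_
  by_contra hdet
  have hM : 0 ≤ M := by
    obtain ⟨q, -, hqM, -⟩ := (hP none).1
    exact (Nat.cast_nonneg q).trans hqM.le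
  have hnear (k : Option ι) (l : ι) : |P k l - z l| ≤ h l := by
    have h₁ := (hP k).2.1 l
    have h₂ := (hP k).2.2 l
    simp only [Pi.sub_apply, Pi.add_apply] at h₁ h₂
    rw [abs_le]
    constructor <;> linarith
  refine (one_lt_abs_det_homogenize_mul_pow (fun k => (hP k).1) hdet).not_ge (le_trans ?_ hle)
  gcongr
  exact abs_det_homogenize_le hnear

end Simplex

section Counting

lemma card_filter_abs_natCast_sub_le (F : Finset ℕ) (r : ℕ) (g : ℝ) :
    #{t ∈ F | |((t : ℕ) : ℝ) - g| ≤ r} ≤ 2 * r + 1 := by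
  calc #{t ∈ F | |((t : ℕ) : ℝ) - g| ≤ r} ≤ #(Finset.Icc ⌈g - r⌉ ⌊g + r⌋) := by
        refine Finset.card_le_card_of_injOn (fun t : ℕ => (t : ℤ)) (fun t ht => ?_)
          Nat.cast_injective.injOn
        obtain ⟨-, hlow, hupp⟩ : t ∈ F ∧ -(r : ℝ) ≤ t - g ∧ (t : ℝ) - g ≤ r := by
          simpa [abs_le] using ht
        simp only [Finset.coe_Icc, mem_Icc, Int.ceil_le, Int.le_floor, Int.cast_natCast]
        constructor <;> linarith
    _ ≤ 2 * r + 1 := by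
        have := Int.floor_le_ceil g
        rw [Int.card_Icc, Int.floor_add_natCast, Int.ceil_sub_natCast]
        lia

lemma natFloor_inv_mul_le_one {a : ℝ} (ha : 0 < a) : ⌊a⁻¹⌋₊ * a ≤ 1 :=
  (le_div_iff₀ ha).1 ((Nat.floor_le (inv_pos.2 ha).le).trans_eq (one_div a).symm)

variable {ι κ : Type*} [Fintype ι] [DecidableEq ι] [Fintype κ]

lemma sum_mul_eq_add_sum_mul_update_zero (c t : ι → ℝ) (l₀ : ι) :
    ∑ l, c l * t l = c l₀ * t l₀ + ∑ l, c l * Function.update t l₀ 0 l := by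
  rw [← Finset.add_sum_erase _ _ (Finset.mem_univ l₀),
    ← Finset.add_sum_erase _ (fun l => c l * Function.update t l₀ 0 l) (Finset.mem_univ l₀)]
  simp only [Function.update_self, mul_zero, zero_add]
  congr 1
  refine Finset.sum_congr rfl fun l hl => ?_
  rw [Function.update_of_ne (Finset.ne_of_mem_erase hl)]

lemma card_filter_abs_sum_sub_le_and_update_eq_le {c : ι → ℝ} {l₀ : ι} (hc : c l₀ ≠ 0) {R : ℝ}
    {r : ℕ} (hR : R ≤ |c l₀| * r) (F : Finset (ι → ℕ)) (g : ℝ) (τ : ι → ℕ) :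
    #{t ∈ F | |∑ l, c l * (t l : ℝ) - g| ≤ R ∧ Function.update t l₀ 0 = τ} ≤ 2 * r + 1 := by
  refine (Finset.card_le_card_of_injOn (fun t => t l₀) (fun t ht => ?_) ?_).trans
    (card_filter_abs_natCast_sub_le (F.image fun t => t l₀) r
      ((g - ∑ l, c l * (τ l : ℝ)) / c l₀))
  · simp only [Finset.coe_filter, mem_ofPred_eq] at ht ⊢
    obtain ⟨htF, hslab, rfl⟩ := ht
    refine ⟨Finset.mem_image_of_mem _ htF, le_of_mul_le_mul_left ?_ (abs_pos.2 hc)⟩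
    have hcast (l : ι) : ((Function.update t l₀ 0 l : ℕ) : ℝ) =
        Function.update (fun l => (t l : ℝ)) l₀ 0 l := by
      rcases eq_or_ne l l₀ with rfl | hl <;> simp [*]
    rw [← abs_mul, mul_sub, mul_div_cancel₀ _ hc]
    simp only [hcast]
    calc _ = |∑ l, c l * (t l : ℝ) - g| := by
          rw [sum_mul_eq_add_sum_mul_update_zero c (fun l => (t l : ℝ)) l₀]
          congr 1
          ring
      _ ≤ |c l₀| * r := hslab.trans hR
  · intro t ht t' ht' htt'
    simp only [Finset.coe_filter, mem_ofPred_eq] at ht ht' htt'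
    rw [← Function.update_eq_self l₀ t, ← Function.update_idem (v := 0), ht.2.2, htt', ← ht'.2.2,
      Function.update_idem, Function.update_eq_self]

lemma card_piFinset_update_singleton (p : ι → ℕ) (l₀ : ι) :
    #(Fintype.piFinset (Function.update (fun l => Finset.range (p l)) l₀ {0})) =
      ∏ l ∈ Finset.univ.erase l₀, p l := by
  rw [Fintype.card_piFinset, ← Finset.mul_prod_erase _ _ (Finset.mem_univ l₀),
    Function.update_self, Finset.card_singleton, one_mul]
  refine Finset.prod_congr rfl fun l hl => ?_
  rw [Function.update_of_ne (Finset.ne_of_mem_erase hl), Finset.card_range]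

-- On a line in the direction `l₀` of the largest coefficient, the slab contains few grid points.
lemma exists_card_filter_piFinset_abs_sum_sub_le {c : ι → ℝ} (hc : c ≠ 0) (p : ι → ℕ) (K : ℕ)
    (g : ℝ) :
    ∃ l₀, #{t ∈ Fintype.piFinset fun l => Finset.range (p l) |
        |∑ l, c l * (t l : ℝ) - g| ≤ K * ∑ l, |c l|} ≤
      (2 * (K * Fintype.card ι) + 1) * ∏ l ∈ Finset.univ.erase l₀, p l := by
  obtain ⟨l₁, hl₁⟩ := Function.ne_iff.1 hc
  obtain ⟨l₀, -, hmax⟩ := Finset.univ.exists_max_image (fun l => |c l|) ⟨l₁, Finset.mem_univ l₁⟩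
  have hc₀ : 0 < |c l₀| := (abs_pos.2 hl₁).trans_le (hmax l₁ (Finset.mem_univ l₁))
  have hsum : ∑ l, |c l| ≤ Fintype.card ι * |c l₀| := by
    simpa using Finset.sum_le_card_nsmul _ _ _ hmax
  have hR : K * ∑ l, |c l| ≤ |c l₀| * (K * Fintype.card ι : ℕ) := by
    calc K * ∑ l, |c l| ≤ K * (Fintype.card ι * |c l₀|) := by gcongr
      _ = _ := by push_cast; ring
  refine ⟨l₀, ?_⟩
  rw [← card_piFinset_update_singleton]
  refine Finset.card_le_mul_card_image_of_maps_to (f := fun t => Function.update t l₀ 0)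
    (fun t ht => Fintype.mem_piFinset.2 fun l => ?_) _ fun τ _ => ?_
  · have htl := Fintype.mem_piFinset.1 (Finset.mem_filter.1 ht).1 l
    rcases eq_or_ne l l₀ with rfl | hl
    · simp
    · simpa [hl] using htl
  · rw [Finset.filter_filter]
    exact card_filter_abs_sum_sub_le_and_update_eq_le (abs_pos.1 hc₀) hR _ g τ

/-- The indices of the subboxes of a box when the `l`-th side is cut into pieces of relative length
`α l`; the remainder of length less than one piece is discarded. -/
noncomputable def subboxIndices (α : ι → ℝ) : Finset (ι → ℕ) :=
  Fintype.piFinset fun l => Finset.range ⌊(α l)⁻¹⌋₊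

variable {α : ι → ℝ} {ρ : ℝ}

lemma one_sub_card_mul_le_card_subboxIndices_mul_prod (hα : ∀ l, 0 < α l)
    (hαρ : ∀ l, α l ≤ ρ) (hρ : ρ ≤ 1) :
    1 - Fintype.card ι * ρ ≤ #(subboxIndices α) * ∏ l, α l := by
  calc 1 - Fintype.card ι * ρ ≤ (1 - ρ) ^ Fintype.card ι := by
        simpa [← sub_eq_add_neg] using
          one_add_mul_le_pow (show -2 ≤ -ρ by linarith) (Fintype.card ι)
    _ = ∏ _l : ι, (1 - ρ) := by simp
    _ ≤ ∏ l, ⌊(α l)⁻¹⌋₊ * α l := by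
        refine Finset.prod_le_prod (fun l _ => by linarith) fun l _ => ?_
        have hfloor := mul_lt_mul_of_pos_right (Nat.lt_floor_add_one (α l)⁻¹) (hα l)
        rw [inv_mul_cancel₀ (hα l).ne'] at hfloor
        linarith [hαρ l]
    _ = #(subboxIndices α) * ∏ l, α l := by
        simp [subboxIndices, Fintype.card_piFinset, Finset.prod_mul_distrib]

lemma card_filter_subboxIndices_mul_prod_le (hα : ∀ l, 0 < α l) (hαρ : ∀ l, α l ≤ ρ)
    {c : ι → ℝ} (hc : c ≠ 0) (K : ℕ) (g : ℝ) :
    #{t ∈ subboxIndices α | |∑ l, c l * (t l : ℝ) - g| ≤ K * ∑ l, |c l|} * ∏ l, α l ≤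
      (2 * (K * Fintype.card ι) + 1) * ρ := by
  obtain ⟨l₀, hcard⟩ :=
    exists_card_filter_piFinset_abs_sum_sub_le hc (fun l => ⌊(α l)⁻¹⌋₊) K g
  have hprod : 0 < ∏ l, α l := Finset.prod_pos fun l _ => hα l
  calc _ ≤ (((2 * (K * Fintype.card ι) + 1) * ∏ l ∈ Finset.univ.erase l₀, ⌊(α l)⁻¹⌋₊ : ℕ) : ℝ) *
        ∏ l, α l := by
        gcongr
        exact hcard
    _ = (2 * (K * Fintype.card ι) + 1) *
        (α l₀ * ∏ l ∈ Finset.univ.erase l₀, ⌊(α l)⁻¹⌋₊ * α l) := by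
        rw [← Finset.mul_prod_erase _ _ (Finset.mem_univ l₀), Finset.prod_mul_distrib]
        push_cast
        ring
    _ ≤ (2 * (K * Fintype.card ι) + 1) * (ρ * 1) := by
        have hρ : 0 ≤ ρ := (hα l₀).le.trans (hαρ l₀)
        gcongr
        · exact Finset.prod_nonneg fun l _ => by have := hα l; positivity
        · exact hαρ l₀
        · exact Finset.prod_le_one (fun l _ => by have := hα l; positivity)
            fun l _ => natFloor_inv_mul_le_one (hα l)
    _ = _ := by rw [mul_one]

lemma one_le_two_mul_card_filter_subboxIndices_mul_prod (hα : ∀ l, 0 < α l)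
    (hαρ : ∀ l, α l ≤ ρ) (hρ : ρ ≤ 1) {K : ℕ}
    (hρK : 2 * (Fintype.card ι + Fintype.card κ * (2 * (K * Fintype.card ι) + 1)) * ρ ≤ 1)
    {c : κ → ι → ℝ} (hc : ∀ k, c k ≠ 0) (g : κ → ℝ) :
    1 ≤ 2 * (#{t ∈ subboxIndices α |
      ∀ k, K * ∑ l, |c k l| < |∑ l, c k l * (t l : ℝ) - g k|} * ∏ l, α l) := by
  classical
  set good := {t ∈ subboxIndices α | ∀ k, K * ∑ l, |c k l| < |∑ l, c k l * (t l : ℝ) - g k|}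
    with hgood
  let bad (k : κ) := {t ∈ subboxIndices α | |∑ l, c k l * (t l : ℝ) - g k| ≤ K * ∑ l, |c k l|}
  have hcover : subboxIndices α ⊆ good ∪ Finset.univ.biUnion bad := by
    intro t ht
    by_cases htg : t ∈ good
    · exact Finset.mem_union_left _ htg
    · simp only [hgood, Finset.mem_filter, ht, true_and, not_forall, not_lt] at htg
      simp [bad, ht, htg]
  have hcard : (#(subboxIndices α) : ℝ) ≤ #good + ∑ k, (#(bad k) : ℝ) := by
    exact_mod_cast (Finset.card_le_card hcover).trans <|
      (Finset.card_union_le _ _).trans (by gcongr; exact Finset.card_biUnion_le)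
  have hprod : 0 < ∏ l, α l := Finset.prod_pos fun l _ => hα l
  have hbad : (∑ k, (#(bad k) : ℝ)) * ∏ l, α l ≤
      Fintype.card κ * ((2 * (K * Fintype.card ι) + 1) * ρ) := by
    rw [Finset.sum_mul]
    exact (Finset.sum_le_card_nsmul _ _ _ fun k _ =>
      card_filter_subboxIndices_mul_prod_le hα hαρ (hc k) K (g k)).trans_eq (by simp)
  have htotal := one_sub_card_mul_le_card_subboxIndices_mul_prod hα hαρ hρ
  have := mul_le_mul_of_nonneg_right hcard hprod.le
  linarith

end Counting

section Subbox

/-- The half-open box with sides `s` and lower corner `z`. Closed boxes are written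
`Icc z (z + s)`; half-open ones serve for measuring, as the boxes of a grid are then disjoint. -/
def halfOpenBox {ι : Type*} (s z : ι → ℝ) : Set (ι → ℝ) :=
  univ.pi fun l => Ico (z l) (z l + s l)

/-- The lower corner of the box of index `t` in the grid of mesh `s` with origin `z`. -/
def gridCorner {ι : Type*} (s z : ι → ℝ) (t : ι → ℕ) : ι → ℝ := fun l => z l + t l * s l

/-- The points which no point of `S` approaches to within `r l` in every coordinate `l`. -/
def farFrom {ι : Type*} (S : Set (ι → ℝ)) (r : ι → ℝ) : Set (ι → ℝ) :=
  {X | ∀ x ∈ S, ∃ l, r l < |X l - x l|}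

variable {ι κ : Type*} {s s' z z' : ι → ℝ}

lemma halfOpenBox_subset_halfOpenBox (hz : z ≤ z') (hzs : z' + s' ≤ z + s) :
    halfOpenBox s' z' ⊆ halfOpenBox s z :=
  pi_mono fun l _ => Ico_subset_Ico (hz l) (hzs l)

lemma pairwise_disjoint_halfOpenBox_gridCorner (s z : ι → ℝ) :
    Pairwise (Disjoint on fun t => halfOpenBox s (gridCorner s z t)) := by
  intro t t' hne
  refine disjoint_left.2 fun x hx hx' => hne (funext fun l => ?_)
  obtain ⟨h₁, h₂⟩ : z l + t l * s l ≤ x l ∧ x l < z l + t l * s l + s l := hx l (mem_univ l)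
  obtain ⟨h₁', h₂'⟩ : z l + t' l * s l ≤ x l ∧ x l < z l + t' l * s l + s l := hx' l (mem_univ l)
  have hs : 0 < s l := by linarith
  have hlt : (t l : ℝ) < t' l + 1 := lt_of_mul_lt_mul_right (by linarith) hs.le
  have hlt' : (t' l : ℝ) < t l + 1 := lt_of_mul_lt_mul_right (by linarith) hs.le
  norm_cast at hlt hlt'
  lia

lemma measurableSet_halfOpenBox [Countable ι] (s z : ι → ℝ) : MeasurableSet (halfOpenBox s z) :=
  MeasurableSet.univ_pi fun _ => measurableSet_Ico

variable [Fintype ι]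

lemma volume_halfOpenBox (s z : ι → ℝ) :
    volume (halfOpenBox s z) = ∏ l, ENNReal.ofReal (s l) := by
  simp [halfOpenBox, Real.volume_pi_Ico]

lemma volume_halfOpenBox_mul {α : ι → ℝ} (hα : ∀ l, 0 ≤ α l) (s z z' : ι → ℝ) :
    volume (halfOpenBox (α * s) z) = ENNReal.ofReal (∏ l, α l) * volume (halfOpenBox s z') := by
  simp [volume_halfOpenBox, ENNReal.ofReal_mul, hα, Finset.prod_mul_distrib,
    ENNReal.ofReal_prod_of_nonneg]

lemma le_gridCorner_and_gridCorner_add_le [DecidableEq ι] {α : ι → ℝ} (hα : ∀ l, 0 < α l)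
    (hs : ∀ l, 0 < s l) {t : ι → ℕ} (ht : t ∈ subboxIndices α) :
    z ≤ gridCorner (α * s) z t ∧ gridCorner (α * s) z t + α * s ≤ z + s := by
  have hpos (l : ι) : 0 < (α * s) l := mul_pos (hα l) (hs l)
  refine ⟨fun l => le_add_of_nonneg_right (mul_nonneg (Nat.cast_nonneg _) (hpos l).le),
    fun l => ?_⟩
  have htl : t l + 1 ≤ ⌊(α l)⁻¹⌋₊ := Finset.mem_range.1 (Fintype.mem_piFinset.1 ht l)
  have htα : ((t l + 1 : ℕ) : ℝ) * α l ≤ 1 :=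
    (mul_le_mul_of_nonneg_right (Nat.cast_le.2 htl) (hα l).le).trans
      (natFloor_inv_mul_le_one (hα l))
  calc gridCorner (α * s) z t l + (α * s) l = z l + ((t l + 1 : ℕ) : ℝ) * α l * s l := by
        simp only [gridCorner, Pi.mul_apply]
        push_cast
        ring
    _ ≤ z l + 1 * s l := by
        have := (hs l).le
        gcongr
    _ = (z + s) l := by simp

lemma abs_sum_mul_sub_le_of_mem_Icc_gridCorner {a x X : ι → ℝ} {b : ℝ} {t : ι → ℕ}
    (hx : a ⬝ᵥ x = b) (hX : X ∈ Icc (gridCorner s z t) (gridCorner s z t + s))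
    (hXx : ∀ l, |X l - x l| ≤ s l) :
    |∑ l, a l * s l * t l - (b - a ⬝ᵥ z)| ≤ (2 : ℕ) * ∑ l, |a l * s l| := by
  have hsum : ∑ l, a l * s l * t l - (b - a ⬝ᵥ z) = ∑ l, a l * (gridCorner s z t l - x l) := by
    simp only [← hx, dotProduct, ← Finset.sum_sub_distrib, gridCorner]
    exact Finset.sum_congr rfl fun l _ => by ring
  rw [hsum, Finset.mul_sum]
  refine (Finset.abs_sum_le_sum_abs _ _).trans (Finset.sum_le_sum fun l _ => ?_)
  have hs : 0 ≤ s l := (abs_nonneg _).trans (hXx l)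
  have hX₁ : gridCorner s z t l ≤ X l := hX.1 l
  have hX₂ : X l ≤ gridCorner s z t l + s l := hX.2 l
  obtain ⟨hXx₁, hXx₂⟩ := abs_le.1 (hXx l)
  have hle : |gridCorner s z t l - x l| ≤ 2 * s l := abs_le.2 ⟨by linarith, by linarith⟩
  calc |a l * (gridCorner s z t l - x l)| ≤ |a l| * (2 * s l) := by
        rw [abs_mul]
        gcongr
    _ = (2 : ℕ) * |a l * s l| := by
        rw [abs_mul, abs_of_nonneg hs]
        push_cast
        ring

lemma Icc_gridCorner_subset_farFrom {a : ι → ℝ} {b : ℝ} {t : ι → ℕ} {S : Set (ι → ℝ)}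
    {r : ι → ℝ} (hr : r ≤ s) (ht : Icc (gridCorner r z t) (gridCorner r z t + r) ⊆ Icc z (z + s))
    (hS : ∀ x ∈ S ∩ Icc (z - (2 : ℝ) • s) (z + (2 : ℝ) • s), a ⬝ᵥ x = b)
    (hfar : (2 : ℕ) * ∑ l, |a l * r l| < |∑ l, a l * r l * t l - (b - a ⬝ᵥ z)|) :
    Icc (gridCorner r z t) (gridCorner r z t + r) ⊆ farFrom S r := by
  intro X hX x hx
  by_contra! hnear
  refine hfar.not_ge (abs_sum_mul_sub_le_of_mem_Icc_gridCorner (hS x ⟨hx, ?_⟩) hX hnear)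
  have hXs := ht hX
  constructor <;> intro l
  all_goals
    have h₁ : z l ≤ X l := hXs.1 l
    have h₂ : X l ≤ z l + s l := hXs.2 l
    obtain ⟨h₃, h₄⟩ := abs_le.1 ((hnear l).trans (hr l))
    simp only [Pi.sub_apply, Pi.add_apply, Pi.smul_apply, smul_eq_mul]
    linarith

lemma exists_measure_lt_of_two_mul_measure_lt {Ω I : Type*} [MeasurableSpace Ω] {μ ν : Measure Ω}
    {F : Finset I} {A : Set Ω} {B : I → Set Ω} (hdisj : (F : Set I).PairwiseDisjoint B)
    (hmeas : ∀ i ∈ F, MeasurableSet (B i)) (hsub : ∀ i ∈ F, B i ⊆ A)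
    (hν : ν A ≤ 2 * ∑ i ∈ F, ν (B i)) (hμ : 2 * μ A < ν A) :
    ∃ i ∈ F, μ (B i) < ν (B i) := by
  by_contra! hle
  refine hμ.not_ge (hν.trans ?_)
  gcongr
  calc ∑ i ∈ F, ν (B i) ≤ ∑ i ∈ F, μ (B i) := Finset.sum_le_sum hle
    _ = μ (⋃ i ∈ F, B i) := (measure_biUnion_finset hdisj hmeas).symm
    _ ≤ μ A := measure_mono (iUnion₂_subset hsub)

variable [Fintype κ]

lemma exists_subbox_subset_farFrom {α : ι → ℝ} {ρ : ℝ} (hα : ∀ l, 0 < α l) (hαρ : ∀ l, α l ≤ ρ)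
    (hρ : ρ ≤ 1)
    (hρκ : 2 * (Fintype.card ι + Fintype.card κ * (4 * Fintype.card ι + 1)) * ρ ≤ 1)
    (hs : ∀ l, 0 < s l) {S : κ → Set (ι → ℝ)}
    (hS : ∀ k, LiesInHyperplane (S k ∩ Icc (z - (2 : ℝ) • s) (z + (2 : ℝ) • s)))
    {μ : Measure (ι → ℝ)} (hμ : 2 * μ (halfOpenBox s z) < volume (halfOpenBox s z)) :
    ∃ z', Icc z' (z' + α * s) ⊆ Icc z (z + s) ∧
      (∀ k, Icc z' (z' + α * s) ⊆ farFrom (S k) (α * s)) ∧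
      μ (halfOpenBox (α * s) z') < volume (halfOpenBox (α * s) z') := by
  classical
  choose a ha b hab using hS
  have hαs (l : ι) : 0 < (α * s) l := mul_pos (hα l) (hs l)
  have hne (k : κ) : (fun l => a k l * (α * s) l) ≠ 0 := by
    obtain ⟨l, hl⟩ := Function.ne_iff.1 (ha k)
    exact Function.ne_iff.2 ⟨l, mul_ne_zero hl (hαs l).ne'⟩
  have hcount := one_le_two_mul_card_filter_subboxIndices_mul_prod hα hαρ hρ (K := 2)
    (by push_cast; linarith) hne fun k => b k - a k ⬝ᵥ z
  set good := {t ∈ subboxIndices α | ∀ k, (2 : ℕ) * ∑ l, |a k l * (α * s) l| <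
    |∑ l, a k l * (α * s) l * t l - (b k - a k ⬝ᵥ z)|}
  have hcorner (t : ι → ℕ) (ht : t ∈ good) :=
    le_gridCorner_and_gridCorner_add_le (z := z) hα hs (Finset.mem_filter.1 ht).1
  have hvolume : volume (halfOpenBox s z) ≤
      2 * ∑ t ∈ good, volume (halfOpenBox (α * s) (gridCorner (α * s) z t)) := by
    simp only [volume_halfOpenBox_mul (fun l => (hα l).le) s _ z, Finset.sum_const, nsmul_eq_mul,
      ← mul_assoc]
    refine le_mul_of_one_le_left zero_le ?_
    rw [← ENNReal.one_le_ofReal, ENNReal.ofReal_mul zero_le_two,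
      ENNReal.ofReal_mul (Nat.cast_nonneg _), ENNReal.ofReal_natCast] at hcount
    simpa [mul_assoc] using hcount
  obtain ⟨t, ht, hlt⟩ := exists_measure_lt_of_two_mul_measure_lt
    ((pairwise_disjoint_halfOpenBox_gridCorner (α * s) z).set_pairwise _)
    (fun t _ => measurableSet_halfOpenBox _ _)
    (fun t ht => halfOpenBox_subset_halfOpenBox (hcorner t ht).1 (hcorner t ht).2) hvolume hμ
  have hsub := Icc_subset_Icc (hcorner t ht).1 (hcorner t ht).2
  refine ⟨_, hsub, fun k => ?_, hlt⟩
  exact Icc_gridCorner_subset_farFrom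
    (fun l => mul_le_of_le_one_left (hs l).le ((hαρ l).trans hρ)) hsub (hab k)
    ((Finset.mem_filter.1 ht).2 k)

end Subbox

section PendingMeasure

variable {Ω I : Type*} [MeasurableSpace Ω] {ν : Measure Ω} {m : I → ℕ} {V : I → Set Ω}

/-- The measure deciding which boxes of level `n` may still be refined if every `V i` is to be left
at level `m i`. A set `V i` counts with a weight that doubles at every level until `m i`, where it
reaches one, and is disregarded afterwards. -/
noncomputable def pendingMeasure (ν : Measure Ω) (m : I → ℕ) (V : I → Set Ω) (n : ℕ) : Measure Ω :=
  Measure.sum fun i => (if n ≤ m i then (2 : ℝ≥0∞) ^ (m i - n) else 0) • ν.restrict (V i)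

lemma two_smul_pendingMeasure_succ_le (n : ℕ) :
    (2 : ℝ≥0∞) • pendingMeasure ν m V (n + 1) ≤ pendingMeasure ν m V n := by
  refine Measure.le_iff.2 fun A hA => ?_
  simp only [pendingMeasure, Measure.smul_apply, Measure.sum_apply _ hA, smul_eq_mul,
    ← ENNReal.tsum_mul_left, ← mul_assoc]
  refine ENNReal.tsum_le_tsum fun i => ?_
  gcongr
  split_ifs with hsucc hle
  · rw [← pow_succ', show m i - (n + 1) + 1 = m i - n by lia]
  · lia
  · simp
  · simp

lemma measure_le_pendingMeasure_of_subset {A : Set Ω} {i : I} (hA : A ⊆ V i) :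
    ν A ≤ pendingMeasure ν m V (m i) A := by
  rw [← Measure.restrict_eq_self ν hA]
  simpa [pendingMeasure] using Measure.le_sum
    (fun i' => (if m i ≤ m i' then (2 : ℝ≥0∞) ^ (m i' - m i) else 0) • ν.restrict (V i')) i A

lemma pendingMeasure_zero_apply_le (A : Set Ω) :
    pendingMeasure ν m V 0 A ≤ ∑' i, 2 ^ m i * ν (V i) :=
  (measure_mono (subset_univ A)).trans_eq (by simp [pendingMeasure])

end PendingMeasure

section NestedBoxes

variable {ι κ I : Type*} [Fintype ι] [Fintype κ] {α s : ι → ℝ} {ρ : ℝ} {D : κ → ℕ → Set (ι → ℝ)}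

lemma exists_seq_subbox_subset_farFrom (hα : ∀ l, 0 < α l) (hαρ : ∀ l, α l ≤ ρ) (hρ : ρ ≤ 1)
    (hρκ : 2 * (Fintype.card ι + Fintype.card κ * (4 * Fintype.card ι + 1)) * ρ ≤ 1)
    (hs : ∀ l, 0 < s l) (hD : ∀ k n z,
      LiesInHyperplane (D k n ∩ Icc (z - (2 : ℝ) • (α ^ n * s)) (z + (2 : ℝ) • (α ^ n * s))))
    {μ : ℕ → Measure (ι → ℝ)} (hμ : ∀ n, (2 : ℝ≥0∞) • μ (n + 1) ≤ μ n) {z₀ : ι → ℝ}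
    (hz₀ : μ 0 (halfOpenBox s z₀) < volume (halfOpenBox s z₀)) :
    ∃ z : ℕ → ι → ℝ, ∀ n,
      μ n (halfOpenBox (α ^ n * s) (z n)) < volume (halfOpenBox (α ^ n * s) (z n)) ∧
      Icc (z (n + 1)) (z (n + 1) + α ^ (n + 1) * s) ⊆ Icc (z n) (z n + α ^ n * s) ∧
      ∀ k, Icc (z (n + 1)) (z (n + 1) + α ^ (n + 1) * s) ⊆ farFrom (D k n) (α ^ (n + 1) * s) := by
  have hstep (n : ℕ) (z : ι → ℝ)
      (hz : μ n (halfOpenBox (α ^ n * s) z) < volume (halfOpenBox (α ^ n * s) z)) :=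
    exists_subbox_subset_farFrom (s := α ^ n * s) hα hαρ hρ hρκ
      (fun l => mul_pos (pow_pos (hα l) n) (hs l)) (hD · n z) ((hμ n _).trans_lt hz)
  simp only [← mul_assoc, ← pow_succ'] at hstep
  choose! next hsub hfar hlt using hstep
  let z : ℕ → ι → ℝ := fun n => Nat.rec z₀ next n
  have hz (n : ℕ) :
      μ n (halfOpenBox (α ^ n * s) (z n)) < volume (halfOpenBox (α ^ n * s) (z n)) := by
    induction n with
    | zero => simpa [z] using hz₀
    | succ n ih => exact hlt n _ ih
  exact ⟨z, fun n => ⟨hz n, hsub n _ (hz n), hfar n _ (hz n)⟩⟩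

lemma exists_mem_farFrom_of_pendingMeasure_lt (hα : ∀ l, 0 < α l) (hαρ : ∀ l, α l ≤ ρ)
    (hρ : ρ ≤ 1) (hρκ : 2 * (Fintype.card ι + Fintype.card κ * (4 * Fintype.card ι + 1)) * ρ ≤ 1)
    (hs : ∀ l, 0 < s l) (hD : ∀ k n z,
      LiesInHyperplane (D k n ∩ Icc (z - (2 : ℝ) • (α ^ n * s)) (z + (2 : ℝ) • (α ^ n * s))))
    {m : I → ℕ} {V : I → Set (ι → ℝ)} {z₀ : ι → ℝ}
    (hz₀ : pendingMeasure volume m V 0 (halfOpenBox s z₀) < volume (halfOpenBox s z₀)) :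
    ∃ X, (∀ k n, X ∈ farFrom (D k n) (α ^ (n + 1) * s)) ∧
      ∀ i, ∃ z, X ∈ Icc z (z + α ^ m i * s) ∧ ¬ halfOpenBox (α ^ m i * s) z ⊆ V i := by
  obtain ⟨z, hz⟩ := exists_seq_subbox_subset_farFrom hα hαρ hρ hρκ hs hD
    two_smul_pendingMeasure_succ_le hz₀
  have hne (n : ℕ) : (Icc (z n) (z n + α ^ n * s)).Nonempty :=
    nonempty_Icc.2 <| le_add_of_nonneg_right fun l => (mul_pos (pow_pos (hα l) n) (hs l)).le
  obtain ⟨X, hX⟩ := IsCompact.nonempty_iInter_of_sequence_nonempty_isCompact_isClosed _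
    (fun n => (hz n).2.1) hne isCompact_Icc fun _ => isClosed_Icc
  rw [mem_iInter] at hX
  exact ⟨X, fun k n => (hz n).2.2 k (hX (n + 1)), fun i => ⟨z (m i), hX (m i), fun hsub =>
    (hz (m i)).1.not_ge (measure_le_pendingMeasure_of_subset hsub)⟩⟩

end NestedBoxes

section HausdorffCover

variable {X : Type*} [MetricSpace X] {d : ℝ}

lemma exists_closedBall_superset_of_ediam_le_one [Nonempty X] {t : Set X}
    (ht : Metric.ediam t ≤ 1) (hd : 0 < d) {ε : ℝ≥0} (hε : 0 < ε) :
    ∃ c r, 0 < r ∧ r ≤ 1 ∧ t ⊆ Metric.closedBall c r ∧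
      ENNReal.ofReal (r ^ d) ≤ (⨆ _ : t.Nonempty, Metric.ediam t ^ d) + ε := by
  obtain ⟨e, he₀, he₁, heε⟩ : ∃ e : ℝ, 0 < e ∧ e ≤ 1 ∧ ENNReal.ofReal (e ^ d) ≤ ε := by
    refine ⟨min 1 ((ε : ℝ) ^ d⁻¹), by positivity, min_le_left _ _, ?_⟩
    rw [← ENNReal.ofReal_coe_nnreal]
    refine ENNReal.ofReal_le_ofReal ?_
    calc min 1 ((ε : ℝ) ^ d⁻¹) ^ d ≤ ((ε : ℝ) ^ d⁻¹) ^ d := by gcongr; exact min_le_right _ _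
      _ = ε := Real.rpow_inv_rpow ε.coe_nonneg hd.ne'
  rcases t.eq_empty_or_nonempty with rfl | hne
  · exact ⟨Classical.arbitrary X, e, he₀, he₁, empty_subset _, by simpa using heε⟩
  have hfin : Metric.ediam t ≠ ∞ := ne_top_of_le_ne_top ENNReal.one_ne_top ht
  have hdiam : Metric.diam t ≤ 1 := ENNReal.toReal_le_of_le_ofReal zero_le_one (by simpa using ht)
  refine ⟨hne.some, max (Metric.diam t) e, lt_max_of_lt_right he₀, max_le hdiam he₁,
    fun x hx => ?_, ?_⟩
  · exact (Metric.dist_le_diam_of_mem' hfin hx hne.some_mem).trans (le_max_left _ _)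
  · have hdiamd : ENNReal.ofReal (Metric.diam t ^ d) = Metric.ediam t ^ d := by
      rw [← ENNReal.ofReal_rpow_of_nonneg Metric.diam_nonneg hd.le, Metric.diam,
        ENNReal.ofReal_toReal hfin]
    simp only [hne, iSup_pos, ← hdiamd]
    rcases max_cases (Metric.diam t) e with ⟨h, -⟩ | ⟨h, -⟩ <;> rw [h]
    exacts [le_self_add, heε.trans le_add_self]

lemma exists_cover_closedBall_of_hausdorffMeasure_eq_zero [Nonempty X] [MeasurableSpace X]
    [BorelSpace X] (hd : 0 < d) {E : Set X} (hE : μH[d] E = 0) {η : ℝ≥0∞} (hη : η ≠ 0) :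
    ∃ (c : ℕ → X) (r : ℕ → ℝ), (∀ n, 0 < r n ∧ r n ≤ 1) ∧
      E ⊆ ⋃ n, Metric.closedBall (c n) (r n) ∧ ∑' n, ENNReal.ofReal (r n ^ d) < η := by
  have hη₂ : η / 2 ≠ 0 := by simpa using hη
  obtain ⟨t, hEt, ht, hsum⟩ : ∃ t : ℕ → Set X, E ⊆ ⋃ n, t n ∧ (∀ n, Metric.ediam (t n) ≤ 1) ∧
      ∑' n, ⨆ _ : (t n).Nonempty, Metric.ediam (t n) ^ d < η / 2 := by
    rw [Measure.hausdorffMeasure_apply] at hE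
    simp only [ENNReal.iSup_eq_zero] at hE
    simpa only [iInf_lt_iff, exists_prop] using
      (hE 1 one_pos).trans_lt (pos_iff_ne_zero.2 hη₂)
  obtain ⟨ε, hε, hεsum⟩ := ENNReal.exists_pos_sum_of_countable hη₂ ℕ
  choose c r hr₀ hr₁ htcr hrε using fun n =>
    exists_closedBall_superset_of_ediam_le_one (ht n) hd (hε n)
  refine ⟨c, r, fun n => ⟨hr₀ n, hr₁ n⟩, hEt.trans (iUnion_mono htcr), ?_⟩
  calc ∑' n, ENNReal.ofReal (r n ^ d)
      ≤ ∑' n, ((⨆ _ : (t n).Nonempty, Metric.ediam (t n) ^ d) + ε n) := ENNReal.tsum_le_tsum hrε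
    _ = (∑' n, ⨆ _ : (t n).Nonempty, Metric.ediam (t n) ^ d) + ∑' n, (ε n : ℝ≥0∞) :=
        ENNReal.tsum_add
    _ < η / 2 + η / 2 := ENNReal.add_lt_add hsum hεsum
    _ = η := ENNReal.add_halves η

end HausdorffCover

section HausdorffLowerBound

variable {ι κ : Type*} [Fintype ι] [Fintype κ] {ρ r d : ℝ}

lemma two_pow_mul_pow_le_rpow {N n : ℕ} (hρ₀ : 0 < ρ) (hρ₁ : ρ < 1)
    (hρd : 2 * ρ ^ (N - d) ≤ 1) (hr : 0 < r) (hrn : r ≤ ρ ^ n) : 2 ^ n * r ^ N ≤ r ^ d := by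
  have hd : 0 ≤ N - d := by
    by_contra! hneg
    linarith [Real.one_lt_rpow_of_pos_of_lt_one_of_neg hρ₀ hρ₁ hneg]
  have hpow : 2 ^ n * r ^ (N - d) ≤ 1 := by
    calc 2 ^ n * r ^ (N - d) ≤ 2 ^ n * (ρ ^ n) ^ (N - d) := by gcongr
      _ = (2 * ρ ^ (N - d)) ^ n := by
          rw [mul_pow, Real.rpow_pow_comm hρ₀.le]
      _ ≤ 1 := pow_le_one₀ (by positivity) hρd
  calc 2 ^ n * r ^ N = 2 ^ n * r ^ (N - d) * r ^ d := by
        rw [mul_assoc, ← Real.rpow_add hr, sub_add_cancel, Real.rpow_natCast]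
    _ ≤ 1 * r ^ d := by gcongr
    _ = r ^ d := one_mul _

lemma exists_two_pow_mul_volume_closedBall_le (hρ₀ : 0 < ρ) (hρ₁ : ρ < 1)
    (hρd : 2 * ρ ^ (Fintype.card ι - d) ≤ 1) (hr₀ : 0 < r) (hr₁ : r ≤ 1) :
    ∃ m : ℕ, ρ ^ m ≤ r ∧ ∀ c : ι → ℝ, 2 ^ m * volume (Metric.closedBall c (2 * r)) ≤
      2 * 4 ^ Fintype.card ι * ENNReal.ofReal (r ^ d) := by
  obtain ⟨n, hlow, hupp⟩ := exists_nat_pow_near_of_lt_one hr₀ hr₁ hρ₀ hρ₁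
  refine ⟨n + 1, hlow.le, fun c => ?_⟩
  rw [Real.volume_pi_closedBall c (by positivity)]
  have hle := two_pow_mul_pow_le_rpow hρ₀ hρ₁ hρd hr₀ hupp
  have hreal : 2 ^ (n + 1) * (2 * (2 * r)) ^ Fintype.card ι ≤
      2 * 4 ^ Fintype.card ι * r ^ d := by
    calc _ = 2 * 4 ^ Fintype.card ι * (2 ^ n * r ^ Fintype.card ι) := by
          rw [← mul_assoc 2 2 r, mul_pow]
          norm_num
          ring
      _ ≤ _ := by gcongr
  have := ENNReal.ofReal_le_ofReal hreal
  rwa [ENNReal.ofReal_mul (by positivity), ENNReal.ofReal_mul (by positivity),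
    ENNReal.ofReal_mul (by positivity), ENNReal.ofReal_pow zero_le_two,
    ENNReal.ofReal_pow zero_le_four, ENNReal.ofReal_ofNat, ENNReal.ofReal_ofNat] at this

lemma halfOpenBox_subset_closedBall {s c z X : ι → ℝ} (hs : ∀ l, s l ≤ r)
    (hX : X ∈ Icc z (z + s)) (hXc : X ∈ Metric.closedBall c r) :
    halfOpenBox s z ⊆ Metric.closedBall c (2 * r) := by
  intro y hy
  have hyX : dist y X ≤ r := by
    refine (dist_pi_le_iff (Metric.nonempty_closedBall.1 ⟨X, hXc⟩)).2 fun l => ?_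
    obtain ⟨hy₁, hy₂⟩ : z l ≤ y l ∧ y l < z l + s l := hy l (mem_univ l)
    have hX₁ : z l ≤ X l := hX.1 l
    have hX₂ : X l ≤ z l + s l := hX.2 l
    exact abs_le.2 ⟨by linarith [hs l], by linarith [hs l]⟩
  rw [Metric.mem_closedBall] at hXc ⊢
  linarith [dist_triangle y X c]

theorem hausdorffMeasure_iInter_farFrom_ne_zero {α s : ι → ℝ} {D : κ → ℕ → Set (ι → ℝ)}
    (hα : ∀ l, 0 < α l) (hαρ : ∀ l, α l ≤ ρ) (hρ₀ : 0 < ρ) (hρ₁ : ρ < 1)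
    (hρκ : 2 * (Fintype.card ι + Fintype.card κ * (4 * Fintype.card ι + 1)) * ρ ≤ 1)
    (hs₀ : ∀ l, 0 < s l) (hs₁ : ∀ l, s l ≤ 1) (hD : ∀ k n z,
      LiesInHyperplane (D k n ∩ Icc (z - (2 : ℝ) • (α ^ n * s)) (z + (2 : ℝ) • (α ^ n * s))))
    (hd : 0 < d) (hρd : 2 * ρ ^ (Fintype.card ι - d) ≤ 1) :
    μH[d] (⋂ k, ⋂ n, farFrom (D k n) (α ^ (n + 1) * s)) ≠ 0 := by
  intro hzero
  have hvol : volume (halfOpenBox s 0) ≠ 0 := by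
    simp [volume_halfOpenBox, Finset.prod_eq_zero_iff, hs₀]
  obtain ⟨c, r, hr, hcover, hsum⟩ := exists_cover_closedBall_of_hausdorffMeasure_eq_zero hd hzero
    (ENNReal.div_ne_zero.2 ⟨hvol, (by finiteness : 2 * 4 ^ Fintype.card ι ≠ ∞)⟩)
  choose m hmr hmvol using fun i =>
    exists_two_pow_mul_volume_closedBall_le (ι := ι) hρ₀ hρ₁ hρd (hr i).1 (hr i).2
  have hpending : pendingMeasure volume m (fun i => Metric.closedBall (c i) (2 * r i)) 0
      (halfOpenBox s 0) < volume (halfOpenBox s 0) := by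
    calc _ ≤ ∑' i, 2 ^ m i * volume (Metric.closedBall (c i) (2 * r i)) :=
          pendingMeasure_zero_apply_le _
      _ ≤ ∑' i, 2 * 4 ^ Fintype.card ι * ENNReal.ofReal (r i ^ d) :=
          ENNReal.tsum_le_tsum fun i => hmvol i (c i)
      _ = 2 * 4 ^ Fintype.card ι * ∑' i, ENNReal.ofReal (r i ^ d) := ENNReal.tsum_mul_left
      _ < volume (halfOpenBox s 0) := ENNReal.mul_lt_of_lt_div' hsum
  obtain ⟨X, hfar, hleave⟩ :=
    exists_mem_farFrom_of_pendingMeasure_lt hα hαρ hρ₁.le hρκ hs₀ hD hpending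
  obtain ⟨i, hi⟩ := mem_iUnion.1 (hcover (mem_iInter₂.2 hfar))
  obtain ⟨z, hXz, hnot⟩ := hleave i
  refine hnot (halfOpenBox_subset_closedBall (fun l => ?_) hXz hi)
  calc α l ^ m i * s l ≤ ρ ^ m i * 1 := by
        gcongr
        exacts [(hs₀ l).le, (hα l).le, hαρ l, hs₁ l]
    _ ≤ r i := by simpa using hmr i

end HausdorffLowerBound

section WeightedBad

/-- The set `Bad(w)` of `w`-badly approximable points of `ℝ^ι`. The maximum over the coordinates of
positive weight is rendered by an existential quantifier. -/
def weightedBad {ι : Type*} (w : ι → ℝ) : Set (ι → ℝ) :=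
  {x | ∃ c : ℝ, 0 < c ∧ ∀ q : ℕ, 0 < q →
    ∃ l, 0 < w l ∧ c / q < distToNearestInt (q * x l) ^ (1 / w l)}

/-- The coordinates of positive weight. -/
noncomputable def posSupport {ι : Type*} [Fintype ι] (w : ι → ℝ) : Finset ι := {l | 0 < w l}

lemma badPair_eq_weightedBad (i j : ℝ) : badPair i j = weightedBad ![i, j] := by
  simp [badPair, weightedBad, Fin.exists_fin_two]

variable {ι κ : Type*} {w : ι → ℝ} {T : ℝ}

lemma mem_weightedBad_single_one [DecidableEq ι] {l : ι} {x : ι → ℝ} :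
    x ∈ weightedBad (Pi.single l 1) ↔ x l ∈ badOneDim := by
  have hweight (l' : ι) : 0 < (Pi.single l 1 : ι → ℝ) l' ↔ l' = l := by
    rcases eq_or_ne l' l with rfl | h <;> simp [*]
  simp [weightedBad, badOneDim, hweight]

lemma abs_sub_round_mul_div {q : ℕ} (hq : 0 < q) (y : ℝ) :
    |y - round (q * y) / q| = distToNearestInt (q * y) / q := by
  have hq' : (0 : ℝ) < q := by exact_mod_cast hq
  rw [distToNearestInt, eq_div_iff hq'.ne', ← abs_of_pos hq', ← abs_mul, abs_of_pos hq', sub_mul,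
    div_mul_cancel₀ _ hq'.ne', mul_comm]

lemma rpow_one_div_div_le {a u : ℝ} {n q : ℕ} (ha : 0 ≤ a) (hu : 0 < u) (hT : 0 < T)
    (hq : 0 < q) (hTq : T ^ n ≤ q) :
    a ^ (1 / u) / q ≤ (q * (a * (T ^ (-(1 + u))) ^ n)) ^ (1 / u) := by
  have hq' : (0 : ℝ) < q := by exact_mod_cast hq
  calc a ^ (1 / u) / q = (q * (a * (q : ℝ) ^ (-(1 + u)))) ^ (1 / u) := by
        rw [mul_left_comm, ← Real.rpow_one_add' hq'.le (show 1 + -(1 + u) ≠ 0 by simp [hu.ne']),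
          Real.mul_rpow ha (by positivity), ← Real.rpow_mul hq'.le,
          show (1 + -(1 + u)) * (1 / u) = -1 by field_simp; ring, Real.rpow_neg_one,
          div_eq_mul_inv]
    _ ≤ (q * (a * (T ^ n) ^ (-(1 + u)))) ^ (1 / u) := by
        have := Real.rpow_le_rpow_of_nonpos (pow_pos hT n) hTq (show -(1 + u) ≤ 0 by linarith)
        gcongr (q * (a * ?_)) ^ (1 / u)
    _ = _ := by rw [Real.rpow_pow_comm hT.le]

variable [Fintype ι]

lemma mem_posSupport {l : ι} : l ∈ posSupport w ↔ 0 < w l := by simp [posSupport]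

lemma exists_mul_lt_distToNearestInt_of_mem_farFrom {r X : ι → ℝ} {M : ℝ} {q : ℕ}
    (hr : ∀ l, 0 ≤ r l) (hq : 0 < q) (hqM : q < M)
    (hX : X ∈ farFrom ((posSupport w).restrict ⁻¹' rationalPoints (posSupport w) M) r) :
    ∃ l, 0 < w l ∧ q * r l < distToNearestInt (q * X l) := by
  classical
  obtain ⟨l, hl⟩ := hX (fun l => if l ∈ posSupport w then round (q * X l) / q else X l)
    ⟨q, hq, hqM, fun l => ⟨round (q * X l), by simp⟩⟩
  by_cases hlw : l ∈ posSupport w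
  · rw [if_pos hlw, abs_sub_round_mul_div hq, lt_div_iff₀' (by exact_mod_cast hq)] at hl
    exact ⟨l, mem_posSupport.1 hlw, hl⟩
  · rw [if_neg hlw, sub_self, abs_zero] at hl
    exact absurd hl (hr l).not_gt

lemma mem_weightedBad_of_forall_mem_farFrom {α X : ι → ℝ} {δ : ℝ} (hα : ∀ l, 0 < α l)
    (hαT : ∀ l, 0 < w l → α l = T ^ (-(1 + w l))) (hT : 1 < T) (hδ : 0 < δ)
    (hX : ∀ n : ℕ, X ∈ farFrom
      ((posSupport w).restrict ⁻¹' rationalPoints (posSupport w) (T ^ (n + 1)))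
      (α ^ (n + 1) * fun _ => δ)) :
    X ∈ weightedBad w := by
  have hδα (l : ι) : 0 < δ * α l := mul_pos hδ (hα l)
  obtain ⟨c, hc, hc₀⟩ : ∃ c : ℝ, (∀ l, c ≤ (δ * α l) ^ (1 / w l)) ∧ 0 < c :=
    ((eventually_all.2 fun l => (eventually_le_nhds (Real.rpow_pos_of_pos (hδα l) _)).filter_mono
      nhdsWithin_le_nhds).and self_mem_nhdsWithin).exists (f := 𝓝[>] 0)
  refine ⟨c, hc₀, fun q hq => ?_⟩
  obtain ⟨n, hlow, hupp⟩ := exists_nat_pow_near (Nat.one_le_cast.2 hq) hT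
  obtain ⟨l, hl, hlt⟩ := exists_mul_lt_distToNearestInt_of_mem_farFrom
    (fun l => (mul_pos (pow_pos (hα l) (n + 1)) hδ).le) hq hupp (hX n)
  refine ⟨l, hl, ?_⟩
  calc c / q ≤ (δ * α l) ^ (1 / w l) / q := by gcongr; exact hc l
    _ ≤ (q * (δ * α l * (T ^ (-(1 + w l))) ^ n)) ^ (1 / w l) :=
        rpow_one_div_div_le (hδα l).le hl (zero_lt_one.trans hT) hq hlow
    _ = (q * (α l ^ (n + 1) * δ)) ^ (1 / w l) := by rw [← hαT l hl]; ring_nf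
    _ < distToNearestInt (q * X l) ^ (1 / w l) :=
        Real.rpow_lt_rpow (by have := hα l; positivity) hlt (by positivity)

lemma liesInHyperplane_preimage_restrict_rationalPoints_inter_Icc {S : Finset ι} [Nonempty S]
    {M : ℝ} {h : ι → ℝ} (hle : (#S + 1)! * (∏ l ∈ S, h l) * M ^ (#S + 1) ≤ 1) (z : ι → ℝ) :
    LiesInHyperplane (S.restrict ⁻¹' rationalPoints S M ∩ Icc (z - h) (z + h)) := by
  refine (liesInHyperplane_rationalPoints_inter_Icc (M := M) (h := S.restrict h) ?_
    (S.restrict z)).preimage_restrict.mono fun x hx =>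
      ⟨hx.1, fun l => hx.2.1 l, fun l => hx.2.2 l⟩
  simpa [Finset.prod_attach S h] using hle

lemma prod_posSupport_rpow (hw : w ∈ stdSimplex ℝ ι) (hT : 0 < T) :
    ∏ l ∈ posSupport w, T ^ (-(1 + w l)) = (T ^ (#(posSupport w) + 1))⁻¹ := by
  have hsum : ∑ l ∈ posSupport w, w l = 1 := by
    rw [← hw.2]
    exact Finset.sum_subset (Finset.subset_univ _) fun l _ hl =>
      le_antisymm (not_lt.1 fun h => hl (mem_posSupport.2 h)) (hw.1 l)
  rw [← Real.rpow_sum_of_pos hT, Finset.sum_neg_distrib, Finset.sum_add_distrib, hsum,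
    Real.rpow_neg hT.le, ← Real.rpow_natCast]
  simp

lemma nonempty_posSupport (hw : w ∈ stdSimplex ℝ ι) : (posSupport w).Nonempty := by
  obtain ⟨l, -, hl⟩ := Finset.exists_lt_of_sum_lt (s := Finset.univ) (f := 0) (g := w)
    (by simp [hw.2])
  exact ⟨l, mem_posSupport.2 hl⟩

lemma liesInHyperplane_rationalPoints_inter_Icc_pow {α : ι → ℝ} {δ : ℝ}
    (hw : w ∈ stdSimplex ℝ ι) (hT : 0 < T) (hαT : ∀ l, 0 < w l → α l = T ^ (-(1 + w l)))
    (hδ : (#(posSupport w) + 1)! * (2 * δ) ^ #(posSupport w) * T ^ (#(posSupport w) + 1) ≤ 1)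
    (n : ℕ) (z : ι → ℝ) :
    LiesInHyperplane
      ((posSupport w).restrict ⁻¹' rationalPoints (posSupport w) (T ^ (n + 1)) ∩
        Icc (z - (2 : ℝ) • (α ^ n * fun _ => δ)) (z + (2 : ℝ) • (α ^ n * fun _ => δ))) := by
  have := (nonempty_posSupport hw).to_subtype
  refine liesInHyperplane_preimage_restrict_rationalPoints_inter_Icc (le_of_eq_of_le ?_ hδ) z
  set m := #(posSupport w)
  have hprod : ∏ l ∈ posSupport w, α l = (T ^ (m + 1))⁻¹ := by
    rw [← prod_posSupport_rpow hw hT]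
    exact Finset.prod_congr rfl fun l hl => hαT l (mem_posSupport.1 hl)
  simp only [Pi.smul_apply, Pi.mul_apply, Pi.pow_apply, smul_eq_mul, Finset.prod_mul_distrib,
    Finset.prod_const, Finset.prod_pow, hprod]
  have hcancel : ((T ^ (m + 1))⁻¹) ^ n * (T ^ (n + 1)) ^ (m + 1) = T ^ (m + 1) := by
    rw [pow_right_comm T, inv_pow, pow_succ (T ^ (m + 1)), inv_mul_cancel_left₀ (by positivity)]
  calc _ = (m + 1)! * (2 * δ) ^ m * (((T ^ (m + 1))⁻¹) ^ n * (T ^ (n + 1)) ^ (m + 1)) := by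
        ring
    _ = _ := by rw [hcancel]

end WeightedBad

section Dimension

lemma tendsto_rpow_nhdsGT_zero_of_pos {e : ℝ} (he : 0 < e) :
    Tendsto (fun x : ℝ => x ^ e) (𝓝[>] 0) (𝓝 0) := by
  simpa [Real.zero_rpow he.ne'] using
    (Real.continuousAt_rpow_const 0 e (.inr he.le)).tendsto.mono_left nhdsWithin_le_nhds

lemma exists_mem_Ioo_mul_le_one_and_two_mul_rpow_le_one (C : ℝ) {e : ℝ} (he : 0 < e) :
    ∃ ρ ∈ Ioo (0 : ℝ) 1, C * ρ ≤ 1 ∧ 2 * ρ ^ e ≤ 1 := by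
  have hmul : Tendsto (C * ·) (𝓝[>] 0) (𝓝 (C * 0)) :=
    (tendsto_id.const_mul C).mono_left nhdsWithin_le_nhds
  have hrpow : Tendsto (fun ρ : ℝ => 2 * ρ ^ e) (𝓝[>] 0) (𝓝 (2 * 0)) :=
    (tendsto_rpow_nhdsGT_zero_of_pos he).const_mul 2
  exact ((eventually_mem_set.2 (Ioo_mem_nhdsGT one_pos)).and
    ((hmul.eventually_le_const (by simp)).and (hrpow.eventually_le_const (by simp)))).exists

variable {ι κ : Type*} [Finite κ]

lemma exists_mem_Ioo_forall_rpow_le {τ : κ → ℝ} {ρ : ℝ} (hρ : 0 < ρ) (hτ : ∀ k, 0 < τ k) :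
    ∃ A ∈ Ioo (0 : ℝ) 1, ∀ k, A ^ τ k ≤ ρ :=
  ((eventually_mem_set.2 (Ioo_mem_nhdsGT one_pos)).and (eventually_all.2 fun k =>
    (tendsto_rpow_nhdsGT_zero_of_pos (hτ k)).eventually_le_const hρ)).exists

lemma exists_mem_Ioc_forall_mul_pow_mul_le_one {m : κ → ℕ} (hm : ∀ k, m k ≠ 0) (B C : κ → ℝ) :
    ∃ δ ∈ Ioc (0 : ℝ) 1, ∀ k, B k * (2 * δ) ^ m k * C k ≤ 1 := by
  refine ((eventually_mem_set.2 (Ioc_mem_nhdsGT one_pos)).and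
    (eventually_all.2 fun k => ?_)).exists
  have hcont : Continuous fun δ : ℝ => B k * (2 * δ) ^ m k * C k := by fun_prop
  exact ((hcont.tendsto 0).mono_left nhdsWithin_le_nhds).eventually_le_const (by simp [hm k])

variable [Fintype ι] {v : κ → ι → ℝ} {τ : ι → ℝ} {t : κ → ℝ} {d : ℝ}

theorem hausdorffMeasure_iInter_weightedBad_ne_zero (hv : ∀ k, v k ∈ stdSimplex ℝ ι)
    (hτ : ∀ l, 0 < τ l) (ht : ∀ k, 0 < t k) (hvt : ∀ k l, 0 < v k l → τ l = t k * (1 + v k l))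
    (hd₀ : 0 < d) (hd : d < Fintype.card ι) : μH[d] (⋂ k, weightedBad (v k)) ≠ 0 := by
  have := Fintype.ofFinite κ
  obtain ⟨ρ, ⟨hρ₀, hρ₁⟩, hρκ, hρd⟩ := exists_mem_Ioo_mul_le_one_and_two_mul_rpow_le_one
    (2 * (Fintype.card ι + Fintype.card κ * (4 * Fintype.card ι + 1))) (sub_pos.2 hd)
  obtain ⟨A, ⟨hA₀, hA₁⟩, hAρ⟩ := exists_mem_Ioo_forall_rpow_le hρ₀ hτ
  let α : ι → ℝ := fun l => A ^ τ l
  let T : κ → ℝ := fun k => A ^ (-t k)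
  have hα (l : ι) : 0 < α l := Real.rpow_pos_of_pos hA₀ _
  have hT (k : κ) : 1 < T k :=
    Real.one_lt_rpow_of_pos_of_lt_one_of_neg hA₀ hA₁ (neg_lt_zero.2 (ht k))
  have hαT (k : κ) (l : ι) (hl : 0 < v k l) : α l = T k ^ (-(1 + v k l)) := by
    simp only [α, T, ← Real.rpow_mul hA₀.le, hvt k l hl, neg_mul_neg]
  obtain ⟨δ, ⟨hδ₀, hδ₁⟩, hδ⟩ := exists_mem_Ioc_forall_mul_pow_mul_le_one
    (fun k => (nonempty_posSupport (hv k)).card_ne_zero) (fun k => (#(posSupport (v k)) + 1)!)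
    fun k => T k ^ (#(posSupport (v k)) + 1)
  let D (k : κ) (n : ℕ) : Set (ι → ℝ) :=
    (posSupport (v k)).restrict ⁻¹' rationalPoints (posSupport (v k)) (T k ^ (n + 1))
  have hmeas : μH[d] (⋂ k, ⋂ n, farFrom (D k n) (α ^ (n + 1) * fun _ => δ)) ≠ 0 :=
    hausdorffMeasure_iInter_farFrom_ne_zero hα hAρ hρ₀ hρ₁ hρκ (fun _ => hδ₀) (fun _ => hδ₁)
      (fun k => liesInHyperplane_rationalPoints_inter_Icc_pow (hv k) (one_pos.trans (hT k)) (hαT k)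
        (hδ k)) hd₀ hρd
  exact mt (measure_mono_null (iInter_mono fun k X hX =>
    mem_weightedBad_of_forall_mem_farFrom hα (hαT k) (hT k) hδ₀ (mem_iInter.1 hX))) hmeas

theorem dimH_iInter_weightedBad (hv : ∀ k, v k ∈ stdSimplex ℝ ι) (hτ : ∀ l, 0 < τ l)
    (ht : ∀ k, 0 < t k) (hvt : ∀ k l, 0 < v k l → τ l = t k * (1 + v k l)) :
    dimH (⋂ k, weightedBad (v k)) = Fintype.card ι := by
  refine le_antisymm ((dimH_mono (subset_univ _)).trans_eq (Real.dimH_univ_pi ι))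
    (le_of_forall_lt fun c hc => ?_)
  obtain ⟨d, hcd, hd⟩ := ENNReal.lt_iff_exists_nnreal_btwn.1 hc
  have hd₀ : (0 : ℝ) < d := by exact_mod_cast (zero_le.trans_lt hcd)
  exact hcd.trans_le (le_dimH_of_hausdorffMeasure_ne_zero
    (hausdorffMeasure_iInter_weightedBad_ne_zero hv hτ ht hvt hd₀ (by exact_mod_cast hd)))

theorem dimH_badPair_inter_badProd_eq_two_general {w : ι → ℝ} (hw : w ∈ stdSimplex ℝ ι) :
    dimH {x | x ∈ weightedBad w ∧ ∀ l, x l ∈ badOneDim} = Fintype.card ι := by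
  classical
  let v : Option ι → ι → ℝ := fun o => o.elim w fun l => Pi.single l 1
  have hset : {x | x ∈ weightedBad w ∧ ∀ l, x l ∈ badOneDim} = ⋂ o, weightedBad (v o) := by
    ext x
    simp [iInter_option, v, mem_weightedBad_single_one]
  have hpos (l : ι) : 0 < 1 + w l := by linarith [hw.1 l]
  rw [hset]
  refine dimH_iInter_weightedBad (τ := 1 + w) (t := fun o => o.elim 1 fun l => (1 + w l) / 2)
    ?_ hpos ?_ ?_
  · rintro (_ | l)
    exacts [hw, single_mem_stdSimplex ℝ l]
  · rintro (_ | l)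
    exacts [one_pos, half_pos (hpos l)]
  · rintro (_ | l) l' hl'
    · simp [v]
    · obtain rfl : l' = l := by
        by_contra h
        simp [v, h] at hl'
      simp only [v, Option.elim_some, Pi.single_eq_same, Pi.add_apply, Pi.one_apply]
      ring

end Dimension

/-- For any `i, j ≥ 0` with `i + j = 1`, the set `Bad(i,j) ∩ Bad(1,0) ∩ Bad(0,1)` — i.e. the set
of pairs `(x₁, x₂) ∈ ℝ²` which are `(i,j)`-badly approximable and such that both `x₁` and `x₂`
are badly approximable real numbers — has Hausdorff dimension `2`. -/
theorem dimH_badPair_inter_badProd_eq_two (i j : ℝ) (hi : 0 ≤ i) (hj : 0 ≤ j)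
    (hij : i + j = 1) :
    dimH {x : Fin 2 → ℝ | x ∈ badPair i j ∧ x 0 ∈ badOneDim ∧ x 1 ∈ badOneDim} = 2 := by
  simpa [badPair_eq_weightedBad, Fin.forall_fin_two] using
    dimH_badPair_inter_badProd_eq_two_general (w := ![i, j])
      ⟨by simp [Fin.forall_fin_two, hi, hj], by simpa using hij⟩
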